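/- arXiv:2003.00371 — 2 statements merged into one kernel-verified Lean document; each statement's English description precedes it below -/
import Mathlib

section
/- Let γ1 > 0 and γ2 > 0, and suppose the step size satisfies 0 < t ≤ α²/(2α²γ2 + 1) and the initialization satisfies αI ⪯ Ω^{(0)} ⪯ βI. Then every GEN-ISTA iterate satisfies αI ⪯ Ω^{(k)} ⪯ b'I for all k ≥ 0, where b' = ‖Ω*‖₂ + ‖Ω^{(0)} − Ω*‖_F, and moreover b' ≤ β + √p·(β − α). -/
open Matrix BigOperators Kronecker

/-- Frobenius norm of a real matrix. -/
noncomputable def frobNorm {n : Type*} [Fintype n] (A : Matrix n n ℝ) : ℝ :=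
  Real.sqrt (∑ i, ∑ j, (A i j)^2)

/-- Entrywise L1 norm of a real matrix. -/
noncomputable def l1Norm {n : Type*} [Fintype n] (A : Matrix n n ℝ) : ℝ :=
  ∑ i, ∑ j, |A i j|

/-- Spectral (ℓ2 operator) norm of a real matrix. -/
noncomputable def specNorm {n : Type*} [Fintype n] [DecidableEq n] (A : Matrix n n ℝ) : ℝ :=
  ‖Matrix.toEuclideanCLM (𝕜 := ℝ) A‖

/-- Largest eigenvalue ρ₁(A) of a symmetric real matrix (junk value 0 otherwise). -/
noncomputable def maxEig {n : Type*} [Fintype n] [DecidableEq n] (A : Matrix n n ℝ) : ℝ :=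
  if h : A.IsHermitian then ⨆ i, h.eigenvalues i else 0

/-- Smallest eigenvalue ρ_p(A) of a symmetric real matrix (junk value 0 otherwise). -/
noncomputable def minEig {n : Type*} [Fintype n] [DecidableEq n] (A : Matrix n n ℝ) : ℝ :=
  if h : A.IsHermitian then ⨅ i, h.eigenvalues i else 0

/-- Loewner order: A ⪯ B iff B - A is positive semidefinite. -/
def loewnerLE {n : Type*} [Fintype n] (A B : Matrix n n ℝ) : Prop := (B - A).PosSemidef

/-- Entrywise soft-thresholding operator. -/
noncomputable def Sft {n : Type*} (A : Matrix n n ℝ) (τ : ℝ) : Matrix n n ℝ :=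
  Matrix.of fun i j => Real.sign (A i j) * max (|A i j| - τ) 0

/-- The elastic-net penalized Gaussian likelihood objective
  F(Ω) = tr(S̃Ω) − log det Ω + γ1‖Ω‖₁ + γ2‖Ω‖_F². -/
noncomputable def genObj {n : Type*} [Fintype n] [DecidableEq n]
    (S : Matrix n n ℝ) (γ1 γ2 : ℝ) (Ω : Matrix n n ℝ) : ℝ :=
  (S * Ω).trace - Real.log Ω.det + γ1 * l1Norm Ω + γ2 * (frobNorm Ω)^2


lemma quad_diag {p : ℕ} (U : Matrix (Fin p) (Fin p) ℝ) (l x : Fin p → ℝ) :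
    x ⬝ᵥ ((U * diagonal l * Uᵀ) *ᵥ x) = ∑ i, l i * ((Uᵀ *ᵥ x) i)^2 := by
  rw [← mulVec_mulVec, ← mulVec_mulVec, dotProduct_mulVec, ← mulVec_transpose]
  simp only [dotProduct, mulVec_diagonal]
  exact Finset.sum_congr rfl fun i _ => by ring

lemma quad_orth {p : ℕ} (U : Matrix (Fin p) (Fin p) ℝ) (hU : U * Uᵀ = 1) (x : Fin p → ℝ) :
    x ⬝ᵥ x = ∑ i, ((Uᵀ *ᵥ x) i)^2 := by
  have := quad_diag U (fun _ => 1) x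
  simpa [hU] using this

lemma exists_diag {p : ℕ} {A : Matrix (Fin p) (Fin p) ℝ} (hA : A.IsHermitian) :
    ∃ U : Matrix (Fin p) (Fin p) ℝ, Uᵀ * U = 1 ∧ U * Uᵀ = 1 ∧
      A = U * diagonal hA.eigenvalues * Uᵀ := by
  refine ⟨hA.eigenvectorUnitary, ?_, ?_, ?_⟩
  · have := Unitary.coe_star_mul_self hA.eigenvectorUnitary
    simpa [star_eq_conjTranspose] using this
  · have := Unitary.coe_mul_star_self hA.eigenvectorUnitary
    simpa [star_eq_conjTranspose] using this
  · have := hA.spectral_theorem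
    simpa [Unitary.conjStarAlgAut_apply, star_eq_conjTranspose, Function.comp_def] using this

lemma eig_ge {p : ℕ} {U : Matrix (Fin p) (Fin p) ℝ} (hU : Uᵀ * U = 1)  (hU' : U * Uᵀ = 1) (i : Fin p) :
    ∃ x : Fin p → ℝ, x ⬝ᵥ x = 1 ∧ ∀ l : Fin p → ℝ,
      x ⬝ᵥ ((U * diagonal l * Uᵀ) *ᵥ x) = l i := by
  refine ⟨U *ᵥ Pi.single i 1, ?_, fun l => ?_⟩
  · rw [quad_orth U hU', mulVec_mulVec, hU]
    simp [Matrix.one_apply]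
  · rw [quad_diag, mulVec_mulVec, hU]
    simp [Matrix.one_apply]

lemma rayleigh_max {p : ℕ} {S : Matrix (Fin p) (Fin p) ℝ} (hS : S.IsHermitian) (x : Fin p → ℝ) :
    x ⬝ᵥ (S *ᵥ x) ≤ maxEig S * (x ⬝ᵥ x) := by
  obtain ⟨U, h1, h2, h3⟩ := exists_diag hS
  have e1 := quad_diag U hS.eigenvalues x
  rw [← h3] at e1
  rw [e1, quad_orth U h2, Finset.mul_sum]
  refine Finset.sum_le_sum fun i _ => mul_le_mul_of_nonneg_right ?_ (sq_nonneg _)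
  rw [maxEig, dif_pos hS]
  exact le_ciSup (Set.finite_range _).bddAbove i

lemma rayleigh_min {p : ℕ} {S : Matrix (Fin p) (Fin p) ℝ} (hS : S.IsHermitian) (x : Fin p → ℝ) :
    minEig S * (x ⬝ᵥ x) ≤ x ⬝ᵥ (S *ᵥ x) := by
  obtain ⟨U, h1, h2, h3⟩ := exists_diag hS
  have e1 := quad_diag U hS.eigenvalues x
  rw [← h3] at e1
  rw [e1, quad_orth U h2, Finset.mul_sum]
  refine Finset.sum_le_sum fun i _ => mul_le_mul_of_nonneg_right ?_ (sq_nonneg _)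
  rw [minEig, dif_pos hS]
  exact ciInf_le (Set.finite_range _).bddBelow i

lemma inv_diag {p : ℕ} {U : Matrix (Fin p) (Fin p) ℝ} (hU : Uᵀ * U = 1)  (hU' : U * Uᵀ = 1)
    {l : Fin p → ℝ} (hl : ∀ i, 0 < l i) :
    (U * diagonal l * Uᵀ)⁻¹ = U * diagonal (fun i => (l i)⁻¹) * Uᵀ := by
  apply inv_eq_right_inv
  calc U * diagonal l * Uᵀ * (U * diagonal (fun i => (l i)⁻¹) * Uᵀ)
      = U * diagonal l * (Uᵀ * U) * diagonal (fun i => (l i)⁻¹) * Uᵀ := by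
        simp only [Matrix.mul_assoc]
    _ = U * (diagonal l * diagonal (fun i => (l i)⁻¹)) * Uᵀ := by
        rw [hU, Matrix.mul_one, Matrix.mul_assoc U]
    _ = 1 := by
        rw [diagonal_mul_diagonal]
        have : (fun i => l i * (l i)⁻¹) = fun _ => (1:ℝ) := by
          ext i; exact mul_inv_cancel₀ (hl i).ne'
        rw [this, diagonal_one, Matrix.mul_one, hU']

/-- Diagonalization of a symmetric matrix with eigenvalues above `a > 0`. -/
lemma exists_diag_ge {p : ℕ} {A : Matrix (Fin p) (Fin p) ℝ} (hA : A.IsHermitian) {a : ℝ}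
    (ha : 0 < a) (h : ∀ x : Fin p → ℝ, a * (x ⬝ᵥ x) ≤ x ⬝ᵥ (A *ᵥ x)) :
    ∃ (U : Matrix (Fin p) (Fin p) ℝ) (l : Fin p → ℝ), Uᵀ * U = 1 ∧ U * Uᵀ = 1 ∧
      (∀ i, a ≤ l i) ∧ A = U * diagonal l * Uᵀ ∧ A⁻¹ = U * diagonal (fun i => (l i)⁻¹) * Uᵀ := by
  obtain ⟨U, h1, h2, h3⟩ := exists_diag hA
  have hl : ∀ i, a ≤ hA.eigenvalues i := by
    intro i
    obtain ⟨x, hx, hx'⟩ := eig_ge h1 h2 i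
    have := h x
    have e := hx' hA.eigenvalues
    rw [← h3] at e
    rw [e, hx] at this
    linarith
  refine ⟨U, hA.eigenvalues, h1, h2, hl, h3, ?_⟩
  conv_lhs => rw [h3]
  exact inv_diag h1 h2 fun i => ha.trans_le (hl i)

/-- squared Frobenius norm -/
noncomputable def fsq {p : ℕ} (A : Matrix (Fin p) (Fin p) ℝ) : ℝ := ∑ i, ∑ j, (A i j)^2

/-- Frobenius inner product -/
noncomputable def fip {p : ℕ} (A B : Matrix (Fin p) (Fin p) ℝ) : ℝ := ∑ i, ∑ j, A i j * B i j

lemma fsq_nonneg {p : ℕ} (A : Matrix (Fin p) (Fin p) ℝ) : 0 ≤ fsq A :=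
  Finset.sum_nonneg fun _ _ => Finset.sum_nonneg fun _ _ => sq_nonneg _

lemma fip_trace {p : ℕ} (A B : Matrix (Fin p) (Fin p) ℝ) : (Aᵀ * B).trace = fip A B := by
  simp only [fip, trace, diag, mul_apply, transpose_apply]
  exact Finset.sum_comm

lemma fsq_eq_fip {p : ℕ} (A : Matrix (Fin p) (Fin p) ℝ) : fsq A = fip A A := by
  simp only [fsq, fip, sq]

lemma fip_sq_le {p : ℕ} (A B : Matrix (Fin p) (Fin p) ℝ) : (fip A B)^2 ≤ fsq A * fsq B := by
  have := Finset.sum_mul_sq_le_sq_mul_sq (Finset.univ : Finset (Fin p × Fin p))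
    (fun ij => A ij.1 ij.2) (fun ij => B ij.1 ij.2)
  simpa only [fip, fsq, Fintype.sum_prod_type] using this

lemma fsq_orth {p : ℕ} (U V D : Matrix (Fin p) (Fin p) ℝ) (hU : U * Uᵀ = 1) (hV : V * Vᵀ = 1) :
    fsq (Uᵀ * D * V) = fsq D := by
  rw [fsq_eq_fip, fsq_eq_fip, ← fip_trace, ← fip_trace]
  have : (Uᵀ * D * V)ᵀ * (Uᵀ * D * V) = Vᵀ * (Dᵀ * D * V) := by
    simp only [transpose_mul, transpose_transpose]
    calc Vᵀ * (Dᵀ * U) * (Uᵀ * D * V) = Vᵀ * (Dᵀ * (U * Uᵀ) * D * V) := by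
          simp only [Matrix.mul_assoc]
      _ = _ := by rw [hU, Matrix.mul_one]
  rw [this, trace_mul_comm, Matrix.mul_assoc, hV, Matrix.mul_one]

lemma quad_le_frob {p : ℕ} (D : Matrix (Fin p) (Fin p) ℝ) (x : Fin p → ℝ) :
    |x ⬝ᵥ (D *ᵥ x)| ≤ Real.sqrt (fsq D) * (x ⬝ᵥ x) := by
  have h1 : x ⬝ᵥ (D *ᵥ x) = fip D (vecMulVec x x) := by
    simp only [fip, dotProduct, mulVec, vecMulVec_apply, Finset.mul_sum]
    exact Finset.sum_congr rfl fun i _ => Finset.sum_congr rfl fun j _ => by ring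
  have h2 : fsq (vecMulVec x x) = (x ⬝ᵥ x)^2 := by
    simp only [fsq, dotProduct, vecMulVec_apply, sq, Finset.sum_mul_sum]
    exact Finset.sum_congr rfl fun i _ => Finset.sum_congr rfl fun j _ => by ring
  have h3 : 0 ≤ x ⬝ᵥ x := Finset.sum_nonneg fun i _ => mul_self_nonneg _
  have h4 := fip_sq_le D (vecMulVec x x)
  rw [h1]
  apply abs_le_of_sq_le_sq _ (by positivity)
  rw [mul_pow, Real.sq_sqrt (fsq_nonneg D), ← h2]
  exact h4

/-- The gradient step is nonexpansive. -/
lemma grad_step {p : ℕ} {A B : Matrix (Fin p) (Fin p) ℝ} (hA : A.IsHermitian) (hB : B.IsHermitian)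
    {a c t : ℝ} (ha : 0 < a) (hAa : ∀ x : Fin p → ℝ, a * (x ⬝ᵥ x) ≤ x ⬝ᵥ (A *ᵥ x))
    (hBa : ∀ x : Fin p → ℝ, a * (x ⬝ᵥ x) ≤ x ⬝ᵥ (B *ᵥ x))
    (ht : 0 ≤ t) (hc : c ≤ 1) (htc : t ≤ c * a^2) :
    fsq ((c • A + t • A⁻¹) - (c • B + t • B⁻¹)) ≤ fsq (A - B) := by
  obtain ⟨U, l, hU, hU', hl, eA, eA'⟩ := exists_diag_ge hA ha hAa
  obtain ⟨V, m, hV, hV', hm, eB, eB'⟩ := exists_diag_ge hB ha hBa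
  rw [← fsq_orth U V _ hU' hV', ← fsq_orth U V (A - B) hU' hV']
  have key : ∀ i j, (Uᵀ * (c • A + t • A⁻¹ - (c • B + t • B⁻¹)) * V) i j
      = (c - t * (l i)⁻¹ * (m j)⁻¹) * (Uᵀ * (A - B) * V) i j := by
    have g1 : ∀ l : Fin p → ℝ, Uᵀ * (U * diagonal l * Uᵀ) * V = diagonal l * (Uᵀ * V) := by
      intro l
      rw [← Matrix.mul_assoc, ← Matrix.mul_assoc, hU, Matrix.one_mul, Matrix.mul_assoc]
    have g2 : ∀ l : Fin p → ℝ, Uᵀ * (V * diagonal l * Vᵀ) * V = (Uᵀ * V) * diagonal l := by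
      intro l
      simp only [Matrix.mul_assoc, hV, Matrix.mul_one]
    intro i j
    have hli : l i ≠ 0 := (ha.trans_le (hl i)).ne'
    have hmj : m j ≠ 0 := (ha.trans_le (hm j)).ne'
    rw [eA', eB', eA, eB]
    simp only [Matrix.mul_sub, Matrix.mul_add, Matrix.sub_mul, Matrix.add_mul, Matrix.mul_smul,
      Matrix.smul_mul, g1, g2, Matrix.sub_apply, Matrix.add_apply, Matrix.smul_apply, diagonal_mul, mul_diagonal,
      smul_eq_mul]
    field_simp
    ring
  refine Finset.sum_le_sum fun i _ => Finset.sum_le_sum fun j _ => ?_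
  rw [key, mul_pow]
  apply mul_le_of_le_one_left (sq_nonneg _)
  have hli : 0 < l i := (ha.trans_le (hl i))
  have hmj : 0 < m j := (ha.trans_le (hm j))
  have hlm : a^2 ≤ l i * m j := by nlinarith [hl i, hm j]
  have h1 : t * (l i)⁻¹ * (m j)⁻¹ ≤ c := by
    rw [mul_assoc, ← mul_inv, ← div_eq_mul_inv, div_le_iff₀ (by positivity)]
    have hc0 : 0 ≤ c := by
      by_contra h
      push Not at h
      have : 0 < a^2 := by positivity
      nlinarith
    nlinarith
  have h2 : 0 ≤ t * (l i)⁻¹ * (m j)⁻¹ := by positivity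
  rw [sq_le_one_iff_abs_le_one, abs_le]
  constructor <;> linarith

lemma grad_lower {p : ℕ} {A : Matrix (Fin p) (Fin p) ℝ} (hA : A.IsHermitian)
    {a c t : ℝ} (ha : 0 < a) (hAa : ∀ x : Fin p → ℝ, a * (x ⬝ᵥ x) ≤ x ⬝ᵥ (A *ᵥ x))
    (htc : t ≤ c * a^2) (hc : 0 ≤ c) (x : Fin p → ℝ) :
    (c * a + t * a⁻¹) * (x ⬝ᵥ x) ≤ c * (x ⬝ᵥ (A *ᵥ x)) + t * (x ⬝ᵥ (A⁻¹ *ᵥ x)) := by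
  obtain ⟨U, l, hU, hU', hl, eA, eA'⟩ := exists_diag_ge hA ha hAa
  rw [eA', eA, quad_diag, quad_diag, quad_orth U hU', Finset.mul_sum, Finset.mul_sum,
    Finset.mul_sum, ← Finset.sum_add_distrib]
  refine Finset.sum_le_sum fun i _ => ?_
  rw [← mul_assoc, ← mul_assoc, ← add_mul]
  refine mul_le_mul_of_nonneg_right ?_ (sq_nonneg _)
  have hli : 0 < l i := (ha.trans_le (hl i))
  have e : c * l i + t * (l i)⁻¹ - (c * a + t * a⁻¹) = (l i - a) * (c * (a * l i) - t) / (a * l i) := by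
    field_simp
    ring
  have : 0 ≤ (l i - a) * (c * (a * l i) - t) / (a * l i) := by
    apply div_nonneg (mul_nonneg (by linarith [hl i]) _) (by positivity)
    nlinarith [mul_le_mul_of_nonneg_left (hl i) (mul_nonneg hc ha.le)]
  linarith

lemma sft_ineq (y z τ : ℝ) (hτ : 0 < τ) :
    (y - Real.sign y * max (|y| - τ) 0) * (z - Real.sign y * max (|y| - τ) 0)
      ≤ τ * (|z| - |Real.sign y * max (|y| - τ) 0|) := by
  have hz1 := le_abs_self z
  have hz2 := neg_abs_le z
  rcases le_total (|y|) τ with h | h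
  · rw [max_eq_right (by linarith)]
    simp only [mul_zero, sub_zero, abs_zero]
    calc y * z ≤ |y * z| := le_abs_self _
      _ = |y| * |z| := abs_mul _ _
      _ ≤ τ * |z| := by gcongr
  · rw [max_eq_left (by linarith)]
    rcases lt_or_ge y 0 with hy | hy
    · rw [Real.sign_of_neg hy, abs_of_neg hy] at *
      rw [abs_of_nonpos (by linarith : -1 * (-y - τ) ≤ 0)]
      nlinarith
    · have hy' : 0 < y := by
        rcases hy.eq_or_lt with h0 | h0
        · rw [← h0] at h; simp at h; linarith
        · exact h0
      rw [Real.sign_of_pos hy', abs_of_pos hy'] at *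
      rw [abs_of_nonneg (by linarith : 0 ≤ 1 * (y - τ))]
      nlinarith

lemma sft_diff (y τ : ℝ) (hτ : 0 < τ) : |y - Real.sign y * max (|y| - τ) 0| ≤ τ := by
  rcases le_total (|y|) τ with h | h
  · rw [max_eq_right (by linarith)]
    simpa using h
  · rw [max_eq_left (by linarith)]
    rcases lt_or_ge y 0 with hy | hy
    · rw [Real.sign_of_neg hy, abs_of_neg hy] at *
      rw [abs_le]; constructor <;> linarith
    · have hy' : 0 < y := by
        rcases hy.eq_or_lt with h0 | h0
        · rw [← h0] at h; simp at h; linarith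
        · exact h0
      rw [Real.sign_of_pos hy', abs_of_pos hy'] at *
      rw [abs_le]; constructor <;> linarith

lemma fip_sft {p : ℕ} (Y Z : Matrix (Fin p) (Fin p) ℝ) (τ : ℝ) (hτ : 0 < τ) :
    fip (Y - Sft Y τ) (Z - Sft Y τ) ≤ τ * (l1Norm Z - l1Norm (Sft Y τ)) := by
  simp only [fip, l1Norm, ← Finset.sum_sub_distrib, Finset.mul_sum]
  exact Finset.sum_le_sum fun i _ => Finset.sum_le_sum fun j _ => sft_ineq _ _ _ hτ

lemma sft_herm {p : ℕ} {Y : Matrix (Fin p) (Fin p) ℝ} (hY : Y.IsHermitian) (τ : ℝ) :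
    (Sft Y τ).IsHermitian := by
  ext i j
  have : Y j i = Y i j := by simpa using hY.apply i j
  simp [Sft, this]

lemma logdet_deriv {p : ℕ} {A : Matrix (Fin p) (Fin p) ℝ} (hA : A.PosDef)
    (W : Matrix (Fin p) (Fin p) ℝ) :
    HasDerivAt (fun s : ℝ => Real.log (A + s • W).det) ((A⁻¹ * W).trace) 0 := by
  have hd := hA.det_pos
  have e : ∀ s : ℝ, (A + s • W).det = A.det * (1 + s • (A⁻¹ * W)).det := by
    intro s
    rw [← det_mul, Matrix.mul_add, Matrix.mul_one, Matrix.mul_smul, ← Matrix.mul_assoc,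
      Matrix.mul_nonsing_inv _ hd.ne'.isUnit, Matrix.one_mul]
  set P := (det (1 + (Polynomial.X : Polynomial ℝ) • (A⁻¹ * W).map Polynomial.C)).divX.divX
  have e' : (fun s : ℝ => Real.log (A + s • W).det) = fun s : ℝ =>
      Real.log (A.det * (1 + (A⁻¹ * W).trace * s + P.eval s * s^2)) := by
    funext s
    rw [e, det_one_add_smul]
  rw [e']
  have h1 : HasDerivAt (fun s : ℝ => 1 + (A⁻¹ * W).trace * s + P.eval s * s^2)
      ((A⁻¹ * W).trace) 0 := by
    have a1 := ((hasDerivAt_id (0:ℝ)).const_mul (A⁻¹ * W).trace).const_add 1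
    have a2 := (P.hasDerivAt (0:ℝ)).mul (hasDerivAt_pow 2 (0:ℝ))
    refine (a1.add a2).congr_deriv ?_
    simp
  have h2 := (h1.const_mul A.det).log (by simpa using hd.ne')
  convert h2 using 1
  simp
  field_simp

lemma isHerm_symm {p : ℕ} {A : Matrix (Fin p) (Fin p) ℝ} (hA : A.IsHermitian) : Aᵀ = A := by
  simpa [Matrix.IsHermitian, conjTranspose_eq_transpose_of_trivial] using hA

lemma posDef_lower {p : ℕ} {A : Matrix (Fin p) (Fin p) ℝ} (hA : A.PosDef) :
    ∃ m : ℝ, 0 < m ∧ ∀ x : Fin p → ℝ, m * (x ⬝ᵥ x) ≤ x ⬝ᵥ (A *ᵥ x) := by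
  obtain ⟨U, h1, h2, h3⟩ := exists_diag hA.1
  have hpos := hA.eigenvalues_pos
  obtain ⟨m, hm, hm'⟩ : ∃ m : ℝ, 0 < m ∧ ∀ i, m ≤ hA.1.eigenvalues i := by
    rcases isEmpty_or_nonempty (Fin p) with h | h
    · exact ⟨1, one_pos, fun i => h.elim i⟩
    · obtain ⟨i, hi⟩ := Finite.exists_min hA.1.eigenvalues
      exact ⟨_, hpos i, hi⟩
  refine ⟨m, hm, fun x => ?_⟩
  have e := quad_diag U hA.1.eigenvalues x
  rw [← h3] at e
  rw [e, quad_orth U h2, Finset.mul_sum]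
  exact Finset.sum_le_sum fun i _ => mul_le_mul_of_nonneg_right (hm' i) (sq_nonneg _)

lemma posDef_of_lower {p : ℕ} {A : Matrix (Fin p) (Fin p) ℝ} (hA : A.IsHermitian) {m : ℝ}
    (hm : 0 < m) (h : ∀ x : Fin p → ℝ, m * (x ⬝ᵥ x) ≤ x ⬝ᵥ (A *ᵥ x)) : A.PosDef := by
  refine PosDef.of_dotProduct_mulVec_pos hA fun x hx => ?_
  have h0 : 0 < x ⬝ᵥ x := by simpa using dotProduct_star_self_pos_iff.mpr hx
  have := h x
  have : 0 < m * (x ⬝ᵥ x) := by positivity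
  simp only [star_trivial]
  linarith [h x]

lemma frob_sq {p : ℕ} (A : Matrix (Fin p) (Fin p) ℝ) : frobNorm A ^ 2 = fsq A :=
  Real.sq_sqrt (fsq_nonneg A)

lemma fsq_add_smul {p : ℕ} (A W : Matrix (Fin p) (Fin p) ℝ) (s : ℝ) :
    fsq (A + s • W) = fsq A + s * (2 * fip A W) + s^2 * fsq W := by
  simp only [fsq, fip, Finset.mul_sum, ← Finset.sum_add_distrib]
  refine Finset.sum_congr rfl fun i _ => Finset.sum_congr rfl fun j _ => ?_
  simp only [Matrix.add_apply, Matrix.smul_apply, smul_eq_mul]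
  ring

lemma l1_convex {p : ℕ} (A W : Matrix (Fin p) (Fin p) ℝ) {s : ℝ} (h0 : 0 ≤ s) (h1 : s ≤ 1) :
    l1Norm (A + s • W) ≤ l1Norm A + s * (l1Norm (A + W) - l1Norm A) := by
  simp only [l1Norm, ← Finset.sum_sub_distrib, Finset.mul_sum, ← Finset.sum_add_distrib]
  refine Finset.sum_le_sum fun i _ => Finset.sum_le_sum fun j _ => ?_
  simp only [Matrix.add_apply, Matrix.smul_apply, smul_eq_mul]
  calc |A i j + s * W i j| = |(1 - s) * A i j + s * (A i j + W i j)| := by ring_nf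
    _ ≤ |(1 - s) * A i j| + |s * (A i j + W i j)| := abs_add_le _ _
    _ = (1 - s) * |A i j| + s * |A i j + W i j| := by
      rw [abs_mul, abs_mul, abs_of_nonneg h0, abs_of_nonneg (by linarith : 0 ≤ 1 - s)]
    _ = _ := by ring

open Filter Topology in
/-- Variational inequality at the minimizer. -/
lemma opt_vi {p : ℕ} {S A : Matrix (Fin p) (Fin p) ℝ} (hS : S.IsHermitian) {γ1 γ2 : ℝ}
    (hγ1 : 0 < γ1) (hA : A.PosDef)
    (hmin : ∀ M : Matrix (Fin p) (Fin p) ℝ, M.PosDef → genObj S γ1 γ2 A ≤ genObj S γ1 γ2 M)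
    {W : Matrix (Fin p) (Fin p) ℝ} (hW : W.IsHermitian) :
    0 ≤ fip (S - A⁻¹ + (2 * γ2) • A) W + γ1 * (l1Norm (A + W) - l1Norm A) := by
  obtain ⟨m, hm, hmA⟩ := posDef_lower hA
  set ψ : ℝ → ℝ := fun s => s * (fip S W + γ1 * (l1Norm (A + W) - l1Norm A) + γ2 * (2 * fip A W))
    + s^2 * (γ2 * fsq W) - Real.log (A + s • W).det with hψ
  have hder : HasDerivAt ψ (fip (S - A⁻¹ + (2 * γ2) • A) W + γ1 * (l1Norm (A + W) - l1Norm A)) 0 := by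
    have a1 := (hasDerivAt_id (0:ℝ)).mul_const
      (fip S W + γ1 * (l1Norm (A + W) - l1Norm A) + γ2 * (2 * fip A W))
    have a2 := (hasDerivAt_pow 2 (0:ℝ)).mul_const (γ2 * fsq W)
    have a3 := (a1.add a2).sub (logdet_deriv hA W)
    refine a3.congr_deriv ?_
    have hAi : (A⁻¹)ᵀ = A⁻¹ := isHerm_symm hA.1.inv
    have e1 : (A⁻¹ * W).trace = fip A⁻¹ W := by
      rw [← fip_trace, hAi]
    have e2 : fip (S - A⁻¹ + (2 * γ2) • A) W = fip S W - fip A⁻¹ W + 2 * γ2 * fip A W := by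
      simp only [fip, Finset.mul_sum, ← Finset.sum_add_distrib, ← Finset.sum_sub_distrib]
      refine Finset.sum_congr rfl fun i _ => Finset.sum_congr rfl fun j _ => ?_
      simp only [Matrix.add_apply, Matrix.sub_apply, Matrix.smul_apply, smul_eq_mul]
      ring
    rw [e1, e2]
    simp
    ring
  have hlim := hder.tendsto_slope_zero_right
  refine ge_of_tendsto hlim ?_
  set δ := min 1 (m / 2 / (Real.sqrt (fsq W) + 1)) with hδ
  have hs0 := Real.sqrt_nonneg (fsq W)
  have hδ0 : 0 < δ := by positivity
  filter_upwards [Ioo_mem_nhdsGT hδ0] with s hs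
  have hs1 : s ≤ 1 := hs.2.le.trans (min_le_left _ _)
  have hs2 : s * (Real.sqrt (fsq W) + 1) ≤ m / 2 := by
    rw [← le_div_iff₀ (by positivity)]
    exact hs.2.le.trans (min_le_right _ _)
  have hs3 : s * Real.sqrt (fsq W) ≤ m / 2 := by nlinarith [hs.1]
  have hpd : (A + s • W).PosDef := by
    refine posDef_of_lower (hA.1.add ?_) (half_pos hm) fun x => ?_
    · rw [Matrix.IsHermitian, conjTranspose_smul, hW.eq]; simp
    · have h3 : 0 ≤ x ⬝ᵥ x := Finset.sum_nonneg fun i _ => mul_self_nonneg _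
      have h4 := (abs_le.mp (quad_le_frob W x)).1
      have h5 := hmA x
      rw [add_mulVec, smul_mulVec, dotProduct_add, dotProduct_smul, smul_eq_mul]
      nlinarith [mul_le_mul_of_nonneg_left h4 hs.1.le, mul_le_mul_of_nonneg_right hs3 h3]
  have hobj := hmin _ hpd
  have hl1 := l1_convex A W hs.1.le hs1
  simp only [genObj, frob_sq, fsq_add_smul] at hobj
  have e3 : (S * (A + s • W)).trace = (S * A).trace + s * fip S W := by
    rw [Matrix.mul_add, Matrix.mul_smul, trace_add, trace_smul, smul_eq_mul, ← fip_trace,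
      isHerm_symm hS]
  rw [e3] at hobj
  rw [smul_eq_mul]
  apply mul_nonneg (inv_nonneg.mpr hs.1.le)
  simp only [hψ, zero_add, zero_smul, add_zero, zero_mul]
  nlinarith [mul_le_mul_of_nonneg_left hl1 hγ1.le]

lemma sum_abs_sq_le {p : ℕ} (x : Fin p → ℝ) :
    ∑ i, ∑ j, |x i| * |x j| ≤ p * (x ⬝ᵥ x) := by
  have h := sq_sum_le_card_mul_sum_sq (s := (Finset.univ : Finset (Fin p))) (f := fun i => |x i|)
  rw [← Finset.sum_mul_sum, ← sq]
  simpa [dotProduct, sq] using h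

lemma quad_fip {p : ℕ} (D : Matrix (Fin p) (Fin p) ℝ) (x : Fin p → ℝ) :
    x ⬝ᵥ (D *ᵥ x) = fip D (vecMulVec x x) := by
  simp only [fip, dotProduct, mulVec, vecMulVec_apply, Finset.mul_sum]
  exact Finset.sum_congr rfl fun i _ => Finset.sum_congr rfl fun j _ => by ring

lemma quad_entry_le {p : ℕ} (Z : Matrix (Fin p) (Fin p) ℝ) {τ : ℝ} (hτ : 0 ≤ τ)
    (hZ : ∀ i j, |Z i j| ≤ τ) (x : Fin p → ℝ) : |x ⬝ᵥ (Z *ᵥ x)| ≤ τ * (p * (x ⬝ᵥ x)) := by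
  rw [quad_fip]
  calc |fip Z (vecMulVec x x)| ≤ ∑ i, ∑ j, τ * (|x i| * |x j|) := by
        refine (Finset.abs_sum_le_sum_abs _ _).trans (Finset.sum_le_sum fun i _ => ?_)
        refine (Finset.abs_sum_le_sum_abs _ _).trans (Finset.sum_le_sum fun j _ => ?_)
        rw [abs_mul, vecMulVec_apply, abs_mul]
        exact mul_le_mul_of_nonneg_right (hZ i j) (by positivity)
    _ = τ * ∑ i, ∑ j, |x i| * |x j| := by simp only [Finset.mul_sum]
    _ ≤ _ := mul_le_mul_of_nonneg_left (sum_abs_sq_le x) hτ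

lemma l1_add {p : ℕ} (A W : Matrix (Fin p) (Fin p) ℝ) : l1Norm (A + W) ≤ l1Norm A + l1Norm W := by
  simp only [l1Norm, ← Finset.sum_add_distrib]
  exact Finset.sum_le_sum fun i _ => Finset.sum_le_sum fun j _ => abs_add_le _ _

lemma scalar_root {a c g : ℝ} (hg : 0 < g) (h : a⁻¹ = (c + Real.sqrt (c^2 + 8*g)) / 2) :
    0 < a ∧ a⁻¹ - 2 * g * a = c := by
  have h1 : |c| < Real.sqrt (c^2 + 8*g) := by
    rw [← Real.sqrt_sq_eq_abs]
    exact Real.sqrt_lt_sqrt (sq_nonneg _) (by linarith)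
  have h2 := Real.sq_sqrt (show 0 ≤ c^2 + 8*g by positivity)
  have h3 := neg_abs_le c
  have h4 : 0 < a⁻¹ := by rw [h]; linarith
  have ha : 0 < a := inv_pos.mp h4
  refine ⟨ha, ?_⟩
  set b := a⁻¹ with hb
  have hab : a = b⁻¹ := by simp [hb]
  have h5 : b^2 - c * b - 2 * g = 0 := by rw [h]; nlinarith
  rw [hab]
  field_simp
  linarith

lemma scalar_mono {a l g : ℝ} (hg : 0 < g) (ha : 0 < a) (hl : 0 < l)
    (h : l⁻¹ - 2 * g * l ≤ a⁻¹ - 2 * g * a) : a ≤ l := by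
  by_contra hc
  push Not at hc
  have : a⁻¹ < l⁻¹ := inv_strictAnti₀ hl hc
  nlinarith

lemma star_diag {p : ℕ} {S A : Matrix (Fin p) (Fin p) ℝ} (hS : S.IsHermitian) {γ1 γ2 : ℝ}
    (hγ1 : 0 < γ1) (hγ2 : 0 < γ2) (hA : A.PosDef)
    (hmin : ∀ M : Matrix (Fin p) (Fin p) ℝ, M.PosDef → genObj S γ1 γ2 A ≤ genObj S γ1 γ2 M)
    {α β : ℝ} (hα : 0 < α) (hβ : 0 < β)
    (hα' : α⁻¹ - 2 * γ2 * α = maxEig S + γ1 * p)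
    (hβ' : β⁻¹ - 2 * γ2 * β = minEig S - γ1 * p) :
    ∃ (U : Matrix (Fin p) (Fin p) ℝ) (l : Fin p → ℝ), Uᵀ * U = 1 ∧ U * Uᵀ = 1 ∧
      (∀ i, α ≤ l i ∧ l i ≤ β) ∧ A = U * diagonal l * Uᵀ := by
  obtain ⟨m, hm, hmA⟩ := posDef_lower hA
  obtain ⟨U, l, h1, h2, hl, eA, eA'⟩ := exists_diag_ge hA.1 hm hmA
  refine ⟨U, l, h1, h2, fun i => ?_, eA⟩
  have hli : 0 < l i := hm.trans_le (hl i)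
  obtain ⟨x, hx, hxl⟩ := eig_ge h1 h2 i
  have q1 := hxl l
  rw [← eA] at q1
  have q2 := hxl (fun i => (l i)⁻¹)
  rw [← eA'] at q2
  have r1 := rayleigh_max hS x
  have r2 := rayleigh_min hS x
  rw [hx, mul_one] at r1 r2
  have qG : fip (S - A⁻¹ + (2 * γ2) • A) (vecMulVec x x)
      = x ⬝ᵥ (S *ᵥ x) - (l i)⁻¹ + 2 * γ2 * l i := by
    rw [← quad_fip, add_mulVec, sub_mulVec, smul_mulVec, dotProduct_add, dotProduct_sub,
      dotProduct_smul, q1, q2, smul_eq_mul]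
  have hW : (vecMulVec x x).IsHermitian := by
    ext i j; simp [vecMulVec_apply, mul_comm]
  have hW' : (-vecMulVec x x).IsHermitian := hW.neg
  have hl1 : l1Norm (vecMulVec x x) ≤ p := by
    have := sum_abs_sq_le x
    rw [hx, mul_one] at this
    simpa only [l1Norm, vecMulVec_apply, abs_mul] using this
  have hl1' : l1Norm (-vecMulVec x x) ≤ p := by
    simpa [l1Norm] using hl1
  have v1 := opt_vi hS hγ1 hA hmin hW
  have v2 := opt_vi hS hγ1 hA hmin hW'
  have t1 := l1_add A (vecMulVec x x)
  have t2 := l1_add A (-vecMulVec x x)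
  have e : fip (S - A⁻¹ + (2 * γ2) • A) (-vecMulVec x x)
      = - fip (S - A⁻¹ + (2 * γ2) • A) (vecMulVec x x) := by
    simp [fip]
  rw [e, qG] at v2
  rw [qG] at v1
  have w1 := mul_le_mul_of_nonneg_left
    (show l1Norm (A + vecMulVec x x) - l1Norm A ≤ p by linarith) hγ1.le
  have w2 := mul_le_mul_of_nonneg_left
    (show l1Norm (A + -vecMulVec x x) - l1Norm A ≤ p by linarith) hγ1.le
  constructor
  · apply scalar_mono hγ2 hα hli
    linarith
  · apply scalar_mono hγ2 hli hβ
    linarith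

lemma specNorm_le {p : ℕ} {U : Matrix (Fin p) (Fin p) ℝ} (hU : Uᵀ * U = 1) (hU' : U * Uᵀ = 1)
    {l : Fin p → ℝ} {β : ℝ} (hβ : 0 ≤ β) (hl : ∀ i, 0 ≤ l i ∧ l i ≤ β) :
    specNorm (U * diagonal l * Uᵀ) ≤ β := by
  refine ContinuousLinearMap.opNorm_le_bound _ hβ fun x => ?_
  rw [← sq_le_sq₀ (norm_nonneg _) (by positivity), mul_pow, EuclideanSpace.norm_sq_eq,
    EuclideanSpace.norm_sq_eq]
  simp only [Real.norm_eq_abs, sq_abs, ofLp_toEuclideanCLM]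
  set y : Fin p → ℝ := WithLp.ofLp x
  have e0 : ∑ i, (y i)^2 = y ⬝ᵥ y := by simp [dotProduct, sq]
  have e1 : ∑ i, ((U * diagonal l * Uᵀ) *ᵥ y) i ^ 2
      = y ⬝ᵥ ((U * diagonal (fun i => l i * l i) * Uᵀ) *ᵥ y) := by
    have : U * diagonal (fun i => l i * l i) * Uᵀ
        = (U * diagonal l * Uᵀ)ᵀ * (U * diagonal l * Uᵀ) := by
      rw [← diagonal_mul_diagonal]
      simp only [transpose_mul, transpose_transpose, diagonal_transpose]
      calc _ = U * diagonal l * 1 * diagonal l * Uᵀ := by simp only [Matrix.mul_assoc, Matrix.one_mul]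
        _ = _ := by rw [← hU]; simp only [Matrix.mul_assoc]
    generalize U * diagonal l * Uᵀ = M at this ⊢
    rw [this, ← mulVec_mulVec, dotProduct_mulVec, vecMul_transpose]
    simp [dotProduct, sq]
  rw [e0, e1, quad_diag, quad_orth U hU', Finset.mul_sum]
  refine Finset.sum_le_sum fun i _ => mul_le_mul_of_nonneg_right ?_ (sq_nonneg _)
  nlinarith [hl i]

lemma quad_le_spec {p : ℕ} (A : Matrix (Fin p) (Fin p) ℝ) (x : Fin p → ℝ) :
    x ⬝ᵥ (A *ᵥ x) ≤ specNorm A * (x ⬝ᵥ x) := by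
  have h1 := (Matrix.toEuclideanCLM (𝕜 := ℝ) A).le_opNorm (WithLp.toLp 2 x)
  have h2 := real_inner_le_norm (WithLp.toLp 2 x) (Matrix.toEuclideanCLM (𝕜 := ℝ) A (WithLp.toLp 2 x))
  have h3 : inner ℝ (WithLp.toLp 2 x) (Matrix.toEuclideanCLM (𝕜 := ℝ) A (WithLp.toLp 2 x))
      = x ⬝ᵥ (A *ᵥ x) := by
    rw [EuclideanSpace.inner_eq_star_dotProduct, ofLp_toEuclideanCLM, dotProduct_comm]
    simp
  have h4 : ‖WithLp.toLp 2 x‖^2 = x ⬝ᵥ x := by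
    rw [EuclideanSpace.norm_sq_eq]
    simp [dotProduct, sq]
  rw [h3] at h2
  rw [← h4, specNorm]
  nlinarith [norm_nonneg (WithLp.toLp 2 x)]

lemma fsq_le_of_quad {p : ℕ} {D : Matrix (Fin p) (Fin p) ℝ} (hD : D.IsHermitian) {r : ℝ}
    (h : ∀ x : Fin p → ℝ, |x ⬝ᵥ (D *ᵥ x)| ≤ r * (x ⬝ᵥ x)) : fsq D ≤ p * r^2 := by
  obtain ⟨U, h1, h2, h3⟩ := exists_diag hD
  have e : Uᵀ * D * U = diagonal hD.eigenvalues := by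
    conv_lhs => rw [h3]
    calc _ = (Uᵀ * U) * diagonal hD.eigenvalues * (Uᵀ * U) := by simp only [Matrix.mul_assoc]
      _ = _ := by rw [h1]; simp
  rw [← fsq_orth U U D h2 h2, e]
  have : fsq (diagonal hD.eigenvalues) = ∑ i, hD.eigenvalues i ^ 2 := by
    simp only [fsq, diagonal_apply, ite_pow]
    simp
  rw [this]
  have hi : ∀ i ∈ Finset.univ, hD.eigenvalues i ^ 2 ≤ r^2 := by
    intro i _
    obtain ⟨x, hx, hx'⟩ := eig_ge h1 h2 i
    have q := hx' hD.eigenvalues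
    rw [← h3] at q
    have := h x
    rw [q, hx, mul_one, abs_le] at this
    exact sq_le_sq' this.1 this.2
  calc _ ≤ ∑ _i : Fin p, r^2 := Finset.sum_le_sum hi
    _ = _ := by simp

lemma loewner_ge_iff {p : ℕ} {A : Matrix (Fin p) (Fin p) ℝ} (hA : A.IsHermitian) (a : ℝ) :
    loewnerLE (a • (1 : Matrix (Fin p) (Fin p) ℝ)) A ↔
      ∀ x : Fin p → ℝ, a * (x ⬝ᵥ x) ≤ x ⬝ᵥ (A *ᵥ x) := by
  have hh : (A - a • (1 : Matrix (Fin p) (Fin p) ℝ)).IsHermitian := by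
    refine hA.sub ?_
    rw [Matrix.IsHermitian, conjTranspose_smul]; simp
  rw [loewnerLE, posSemidef_iff_dotProduct_mulVec]
  simp only [hh, true_and, star_trivial, sub_mulVec, smul_mulVec, one_mulVec, dotProduct_sub,
    dotProduct_smul, smul_eq_mul, sub_nonneg]

lemma loewner_le_iff {p : ℕ} {A : Matrix (Fin p) (Fin p) ℝ} (hA : A.IsHermitian) (a : ℝ) :
    loewnerLE A (a • (1 : Matrix (Fin p) (Fin p) ℝ)) ↔
      ∀ x : Fin p → ℝ, x ⬝ᵥ (A *ᵥ x) ≤ a * (x ⬝ᵥ x) := by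
  have hh : (a • (1 : Matrix (Fin p) (Fin p) ℝ) - A).IsHermitian := by
    refine IsHermitian.sub ?_ hA
    rw [Matrix.IsHermitian, conjTranspose_smul]; simp
  rw [loewnerLE, posSemidef_iff_dotProduct_mulVec]
  simp only [hh, true_and, star_trivial, sub_mulVec, smul_mulVec, one_mulVec, dotProduct_sub,
    dotProduct_smul, smul_eq_mul, sub_nonneg]

lemma step_herm {p : ℕ} {S A : Matrix (Fin p) (Fin p) ℝ} (hS : S.IsHermitian)
    (hA : A.IsHermitian) (t g τ : ℝ) :
    (Sft (A - t • (S - A⁻¹ + g • A)) τ).IsHermitian := by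
  apply sft_herm
  have hs : ∀ (r : ℝ) {B : Matrix (Fin p) (Fin p) ℝ}, B.IsHermitian → (r • B).IsHermitian := by
    intro r B hB
    rw [Matrix.IsHermitian, conjTranspose_smul, hB.eq]; simp
  exact hA.sub (hs t ((hS.sub hA.inv).add (hs g hA)))

lemma step_lower {p : ℕ} {S A : Matrix (Fin p) (Fin p) ℝ} (hS : S.IsHermitian)
    (hA : A.IsHermitian) {γ1 γ2 α t : ℝ} (hγ1 : 0 < γ1) (hα : 0 < α)
    (hα' : α⁻¹ - 2 * γ2 * α = maxEig S + γ1 * p) (ht0 : 0 < t)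
    (hc : 0 ≤ 1 - 2 * t * γ2) (htc : t ≤ (1 - 2 * t * γ2) * α^2)
    (hAa : ∀ x : Fin p → ℝ, α * (x ⬝ᵥ x) ≤ x ⬝ᵥ (A *ᵥ x)) (x : Fin p → ℝ) :
    α * (x ⬝ᵥ x) ≤ x ⬝ᵥ (Sft (A - t • (S - A⁻¹ + (2 * γ2) • A)) (t * γ1) *ᵥ x) := by
  set Y := A - t • (S - A⁻¹ + (2 * γ2) • A) with hY
  have hτ : 0 < t * γ1 := by positivity
  have h1 := quad_entry_le (Y - Sft Y (t * γ1)) hτ.le (fun i j => sft_diff _ _ hτ) x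
  have h2 := (abs_le.mp h1).2
  have h3 := grad_lower hA hα hAa htc hc x
  have h4 := rayleigh_max hS x
  have e : x ⬝ᵥ (Y *ᵥ x) = (1 - 2 * t * γ2) * (x ⬝ᵥ (A *ᵥ x)) + t * (x ⬝ᵥ (A⁻¹ *ᵥ x))
      - t * (x ⬝ᵥ (S *ᵥ x)) := by
    rw [hY]
    simp only [sub_mulVec, add_mulVec, smul_mulVec, dotProduct_sub, dotProduct_add,
      dotProduct_smul, smul_eq_mul]
    ring
  rw [sub_mulVec, dotProduct_sub, e] at h2
  have h5 := mul_le_mul_of_nonneg_left h4 ht0.le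
  have e2 : ((1 - 2 * t * γ2) * α + t * α⁻¹) = α + t * (maxEig S + γ1 * p) := by
    rw [← hα']; ring
  rw [e2] at h3
  linarith

lemma step_contract {p : ℕ} {S A B : Matrix (Fin p) (Fin p) ℝ} (hS : S.IsHermitian)
    (hA : A.IsHermitian) (hB : B.PosDef) {γ1 γ2 α t : ℝ} (hγ1 : 0 < γ1) (hγ2 : 0 < γ2)
    (hα : 0 < α) (ht0 : 0 < t)
    (hmin : ∀ M : Matrix (Fin p) (Fin p) ℝ, M.PosDef → genObj S γ1 γ2 B ≤ genObj S γ1 γ2 M)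
    (htc : t ≤ (1 - 2 * t * γ2) * α^2)
    (hAa : ∀ x : Fin p → ℝ, α * (x ⬝ᵥ x) ≤ x ⬝ᵥ (A *ᵥ x))
    (hBa : ∀ x : Fin p → ℝ, α * (x ⬝ᵥ x) ≤ x ⬝ᵥ (B *ᵥ x)) :
    fsq (Sft (A - t • (S - A⁻¹ + (2 * γ2) • A)) (t * γ1) - B) ≤ fsq (A - B) := by
  have hX := step_herm hS hA t (2 * γ2) (t * γ1)
  have h1 := fip_sft (A - t • (S - A⁻¹ + (2 * γ2) • A)) B (t * γ1) (by positivity)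
  set Y := A - t • (S - A⁻¹ + (2 * γ2) • A) with hY
  set X := Sft Y (t * γ1)
  have h2 := opt_vi hS hγ1 hB hmin (hX.sub hB.1)
  rw [add_sub_cancel] at h2
  have h3 := grad_step (c := 1 - 2 * t * γ2) hA hB.1 hα hAa hBa ht0.le
    (by have : 0 < t * γ2 := by positivity
        linarith) htc
  refine le_trans ?_ h3
  set N := ((1 - 2 * t * γ2) • A + t • A⁻¹) - ((1 - 2 * t * γ2) • B + t • B⁻¹) with hN
  have e : fip N (X - B) = fsq (X - B) - fip (Y - X) (B - X)
      + t * fip (S - B⁻¹ + (2 * γ2) • B) (X - B) := by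
    simp only [fip, fsq, Finset.mul_sum, ← Finset.sum_add_distrib, ← Finset.sum_sub_distrib]
    refine Finset.sum_congr rfl fun i _ => Finset.sum_congr rfl fun j _ => ?_
    simp only [hN, hY, Matrix.add_apply, Matrix.sub_apply, Matrix.smul_apply, smul_eq_mul]
    ring
  have h4 : fsq (X - B) ≤ fip N (X - B) := by
    have := mul_le_mul_of_nonneg_left h2 ht0.le
    rw [e]
    linarith
  have h5 := fip_sq_le N (X - B)
  have h6 := fsq_nonneg (X - B)
  rcases h6.eq_or_lt with h0 | h0
  · rw [← h0]; exact fsq_nonneg N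
  · have : fsq (X - B) * fsq (X - B) ≤ fsq N * fsq (X - B) := by nlinarith
    exact le_of_mul_le_mul_right this h0

/-- all GEN-ISTA iterates stay in the compact set {αI ⪯ Ω ⪯ b'I}. -/
theorem stmt2 {p : ℕ} (hp : 0 < p)
    (S : Matrix (Fin p) (Fin p) ℝ) (hS : S.IsHermitian)
    (γ1 γ2 : ℝ) (hγ1 : 0 < γ1) (hγ2 : 0 < γ2)
    (Ωstar : Matrix (Fin p) (Fin p) ℝ) (hΩstar : Ωstar.PosDef)
    (hmin : ∀ M : Matrix (Fin p) (Fin p) ℝ, M.PosDef →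
      genObj S γ1 γ2 Ωstar ≤ genObj S γ1 γ2 M)
    (α β : ℝ)
    (hα : α⁻¹ = (maxEig S + γ1 * p + Real.sqrt ((maxEig S + γ1 * p)^2 + 8*γ2)) / 2)
    (hβ : β⁻¹ = (minEig S - γ1 * p + Real.sqrt ((minEig S - γ1 * p)^2 + 8*γ2)) / 2)
    (t : ℝ) (ht0 : 0 < t) (ht : t ≤ α^2 / (2*α^2*γ2 + 1))
    (Ω : ℕ → Matrix (Fin p) (Fin p) ℝ) (h0 : (Ω 0).PosDef)
    (h0l : loewnerLE (α • (1 : Matrix (Fin p) (Fin p) ℝ)) (Ω 0))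
    (h0u : loewnerLE (Ω 0) (β • (1 : Matrix (Fin p) (Fin p) ℝ)))
    (hiter : ∀ k, Ω (k+1) = Sft (Ω k - t • (S - (Ω k)⁻¹ + (2*γ2) • Ω k)) (t*γ1))
    (b' : ℝ) (hb' : b' = specNorm Ωstar + frobNorm (Ω 0 - Ωstar)) :
    (∀ k, loewnerLE (α • (1 : Matrix (Fin p) (Fin p) ℝ)) (Ω k) ∧
        loewnerLE (Ω k) (b' • (1 : Matrix (Fin p) (Fin p) ℝ))) ∧
      b' ≤ β + Real.sqrt p * (β - α) := by
  obtain ⟨hα0, hα'⟩ := scalar_root hγ2 hα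
  obtain ⟨hβ0, hβ'⟩ := scalar_root hγ2 hβ
  obtain ⟨U, l, hU, hU', hl, eU⟩ := star_diag hS hγ1 hγ2 hΩstar hmin hα0 hβ0 hα' hβ'
  have hstar_l : ∀ x : Fin p → ℝ, α * (x ⬝ᵥ x) ≤ x ⬝ᵥ (Ωstar *ᵥ x) := by
    intro x
    rw [eU, quad_diag, quad_orth U hU', Finset.mul_sum]
    exact Finset.sum_le_sum fun i _ => mul_le_mul_of_nonneg_right (hl i).1 (sq_nonneg _)
  have hstar_u : ∀ x : Fin p → ℝ, x ⬝ᵥ (Ωstar *ᵥ x) ≤ β * (x ⬝ᵥ x) := by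
    intro x
    rw [eU, quad_diag, quad_orth U hU', Finset.mul_sum]
    exact Finset.sum_le_sum fun i _ => mul_le_mul_of_nonneg_right (hl i).2 (sq_nonneg _)
  have htc : t ≤ (1 - 2 * t * γ2) * α^2 := by
    rw [le_div_iff₀ (by positivity)] at ht
    linarith
  have hc : 0 ≤ 1 - 2 * t * γ2 := by
    by_contra h
    push Not at h
    have : 0 < α^2 := by positivity
    nlinarith
  have main : ∀ k, (Ω k).IsHermitian ∧
      (∀ x : Fin p → ℝ, α * (x ⬝ᵥ x) ≤ x ⬝ᵥ (Ω k *ᵥ x)) ∧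
      fsq (Ω k - Ωstar) ≤ fsq (Ω 0 - Ωstar) := by
    intro k
    induction k with
    | zero => exact ⟨h0.1, (loewner_ge_iff h0.1 α).mp h0l, le_rfl⟩
    | succ k ih =>
      obtain ⟨i1, i2, i3⟩ := ih
      rw [hiter k]
      exact ⟨step_herm hS i1 _ _ _, step_lower hS i1 hγ1 hα0 hα' ht0 hc htc i2,
        (step_contract hS i1 hΩstar hγ1 hγ2 hα0 ht0 hmin htc i2 hstar_l).trans i3⟩
  refine ⟨fun k => ?_, ?_⟩
  · obtain ⟨i1, i2, i3⟩ := main k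
    refine ⟨(loewner_ge_iff i1 α).mpr i2, (loewner_le_iff i1 b').mpr fun x => ?_⟩
    have h1 := quad_le_spec Ωstar x
    have h2 := (abs_le.mp (quad_le_frob (Ω k - Ωstar) x)).2
    have h3 : 0 ≤ x ⬝ᵥ x := Finset.sum_nonneg fun i _ => mul_self_nonneg _
    have h4 : Real.sqrt (fsq (Ω k - Ωstar)) ≤ frobNorm (Ω 0 - Ωstar) := Real.sqrt_le_sqrt i3
    have h5 := mul_le_mul_of_nonneg_right h4 h3
    rw [sub_mulVec, dotProduct_sub] at h2
    rw [hb', add_mul]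
    linarith
  · have h1 : specNorm Ωstar ≤ β := by
      rw [eU]
      exact specNorm_le hU hU' hβ0.le fun i => ⟨hα0.le.trans (hl i).1, (hl i).2⟩
    have hαβ : α ≤ β := (hl ⟨0, hp⟩).1.trans (hl ⟨0, hp⟩).2
    have h2 : fsq (Ω 0 - Ωstar) ≤ p * (β - α)^2 := by
      refine fsq_le_of_quad (h0.1.sub hΩstar.1) fun x => ?_
      have a1 := (loewner_ge_iff h0.1 α).mp h0l x
      have a2 := (loewner_le_iff h0.1 β).mp h0u x
      have a3 := hstar_l x
      have a4 := hstar_u x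
      rw [sub_mulVec, dotProduct_sub, abs_le]
      constructor <;> linarith
    have h3 : frobNorm (Ω 0 - Ωstar) ≤ Real.sqrt p * (β - α) := by
      have : Real.sqrt (p * (β - α)^2) = Real.sqrt p * (β - α) := by
        rw [Real.sqrt_mul (Nat.cast_nonneg p), Real.sqrt_sq (by linarith)]
      rw [← this]
      exact Real.sqrt_le_sqrt h2
    rw [hb']
    linarith
end

section
/- Let γ2 > 0 and t > 0 with m_t = 1 − 2tγ2 > 0, and let Ω be a symmetric positive definite p×p matrix with aI ⪯ Ω ⪯ bI for 0 < a < b. Define Ω_half = Ω − t(S̃ − Ω⁻¹ + 2γ2·Ω). If √(t/m_t) ∉ [a, b], then ρ_p(Ω_half) ≥ min(m_t·a + t/a, m_t·b + t/b) − t·ρ_1(S̃). -/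
open Matrix BigOperators Kronecker

lemma aux_diag {p : ℕ} (A : Matrix (Fin p) (Fin p) ℝ) (hA : A.IsHermitian) :
    ∃ U : Matrix (Fin p) (Fin p) ℝ, Uᴴ * U = 1 ∧ U * Uᴴ = 1 ∧
      A = U * diagonal hA.eigenvalues * Uᴴ := by
  refine ⟨hA.eigenvectorUnitary, ?_, ?_, ?_⟩
  · exact Unitary.coe_star_mul_self hA.eigenvectorUnitary
  · exact Unitary.coe_mul_star_self hA.eigenvectorUnitary
  · have := hA.spectral_theorem
    rw [Unitary.conjStarAlgAut_apply] at this
    exact this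

lemma aux_psd {p : ℕ} (U : Matrix (Fin p) (Fin p) ℝ) (h1 : Uᴴ * U = 1)
    (v : Fin p → ℝ) :
    (U * diagonal v * Uᴴ).PosSemidef ↔ ∀ i, 0 ≤ v i := by
  constructor
  · intro h
    have h2 := h.conjTranspose_mul_mul_same U
    have e : Uᴴ * (U * diagonal v * Uᴴ) * U = diagonal v := by
      calc _ = (Uᴴ * U) * diagonal v * (Uᴴ * U) := by simp only [Matrix.mul_assoc]
        _ = _ := by rw [h1]; simp
    rw [e] at h2
    exact posSemidef_diagonal_iff.mp h2
  · intro h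
    exact (posSemidef_diagonal_iff.mpr h).mul_mul_conjTranspose_same U

lemma aux_smul_one {p : ℕ} (U : Matrix (Fin p) (Fin p) ℝ) (h1 : U * Uᴴ = 1) (c : ℝ) :
    c • (1 : Matrix (Fin p) (Fin p) ℝ) = U * diagonal (fun _ => c) * Uᴴ := by
  have : (diagonal (fun _ => c) : Matrix (Fin p) (Fin p) ℝ) = c • 1 := by
    rw [smul_one_eq_diagonal]
  rw [this]
  rw [Matrix.mul_smul, Matrix.smul_mul, Matrix.mul_one, h1]

lemma aux_low {p : ℕ} (A : Matrix (Fin p) (Fin p) ℝ) (hA : A.IsHermitian) (c : ℝ) :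
    (A - c • (1 : Matrix (Fin p) (Fin p) ℝ)).PosSemidef ↔ ∀ i, c ≤ hA.eigenvalues i := by
  obtain ⟨U, h1, h2, h3⟩ := aux_diag A hA
  have e : A - c • (1 : Matrix (Fin p) (Fin p) ℝ)
      = U * diagonal (fun i => hA.eigenvalues i - c) * Uᴴ := by
    rw [aux_smul_one U h2 c, ← diagonal_sub, Matrix.mul_sub, Matrix.sub_mul, ← h3]
  rw [e, aux_psd U h1]
  simp

lemma aux_up {p : ℕ} (A : Matrix (Fin p) (Fin p) ℝ) (hA : A.IsHermitian) (c : ℝ) :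
    (c • (1 : Matrix (Fin p) (Fin p) ℝ) - A).PosSemidef ↔ ∀ i, hA.eigenvalues i ≤ c := by
  obtain ⟨U, h1, h2, h3⟩ := aux_diag A hA
  have e : c • (1 : Matrix (Fin p) (Fin p) ℝ) - A
      = U * diagonal (fun i => c - hA.eigenvalues i) * Uᴴ := by
    rw [aux_smul_one U h2 c, ← diagonal_sub, Matrix.mul_sub, Matrix.sub_mul, ← h3]
  rw [e, aux_psd U h1]
  simp

lemma aux_scalar (t mt a b x : ℝ) (ht : 0 < t) (hm : 0 < mt) (ha : 0 < a)
    (hax : a ≤ x) (hxb : x ≤ b) (hout : Real.sqrt (t / mt) ∉ Set.Icc a b) :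
    min (mt * a + t / a) (mt * b + t / b) ≤ mt * x + t / x := by
  have hx : 0 < x := ha.trans_le hax
  have hb : 0 < b := hx.trans_le hxb
  have hs : 0 < Real.sqrt (t / mt) := Real.sqrt_pos.mpr (div_pos ht hm)
  have hsq : mt * (Real.sqrt (t / mt) * Real.sqrt (t / mt)) = t := by
    rw [Real.mul_self_sqrt (div_pos ht hm).le]; field_simp
  set s := Real.sqrt (t / mt)
  have key : ∀ y, 0 < y → mt * x + t / x - (mt * y + t / y)
      = (x - y) * (mt * (x * y) - t) / (x * y) := by
    intro y hy; field_simp; ring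
  rcases lt_or_ge s a with h | h
  · refine (min_le_left _ _).trans (sub_nonneg.mp ?_)
    rw [key a ha]
    have : s * s ≤ x * a := mul_le_mul (by linarith) h.le hs.le hx.le
    have := mul_le_mul_of_nonneg_left this hm.le
    exact div_nonneg (mul_nonneg (by linarith) (by linarith)) (by positivity)
  · have hbs : b < s := by
      by_contra hh
      exact hout ⟨h, not_lt.mp hh⟩
    refine (min_le_right _ _).trans (sub_nonneg.mp ?_)
    rw [key b hb]
    have : x * b ≤ s * s := mul_le_mul (by linarith) hbs.le hb.le hs.le
    have := mul_le_mul_of_nonneg_left this hm.le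
    exact div_nonneg (mul_nonneg_of_nonpos_of_nonpos (by linarith) (by linarith)) (by positivity)

/-- lower eigenvalue bound for the gradient step when √(t/m_t) ∉ [a,b]. -/
theorem stmt8 {p : ℕ} (hp : 0 < p)
    (S : Matrix (Fin p) (Fin p) ℝ) (hS : S.IsHermitian)
    (γ2 t : ℝ) (hγ2 : 0 < γ2) (ht : 0 < t)
    (mt : ℝ) (hmt : mt = 1 - 2*t*γ2) (hmtpos : 0 < mt)
    (a b : ℝ) (ha : 0 < a) (hab : a < b)
    (Ω : Matrix (Fin p) (Fin p) ℝ) (hΩ : Ω.PosDef)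
    (hl : loewnerLE (a • (1 : Matrix (Fin p) (Fin p) ℝ)) Ω)
    (hu : loewnerLE Ω (b • (1 : Matrix (Fin p) (Fin p) ℝ)))
    (Ωhalf : Matrix (Fin p) (Fin p) ℝ)
    (hhalf : Ωhalf = Ω - t • (S - Ω⁻¹ + (2*γ2) • Ω))
    (hout : Real.sqrt (t / mt) ∉ Set.Icc a b) :
    minEig Ωhalf ≥ min (mt * a + t / a) (mt * b + t / b) - t * maxEig S := by
  have hH : Ωhalf.IsHermitian := by
    rw [hhalf]
    have h0 : Ω.IsHermitian := hΩ.1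
    have h1 : Ω⁻¹.IsHermitian := h0.inv
    have e : ∀ (r : ℝ) (A : Matrix (Fin p) (Fin p) ℝ), A.IsHermitian → (r • A).IsHermitian := by
      intro r A hA
      unfold Matrix.IsHermitian at *
      rw [conjTranspose_smul, hA]; simp
    exact h0.sub (e _ _ ((hS.sub h1).add (e _ _ h0)))
  haveI : Nonempty (Fin p) := ⟨⟨0, hp⟩⟩
  unfold minEig maxEig
  rw [dif_pos hH, dif_pos hS]
  set c := min (mt * a + t / a) (mt * b + t / b) with hc
  set ρ := ⨆ i, hS.eigenvalues i with hρ
  refine le_ciInf ?_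
  refine (aux_low Ωhalf hH _).mp ?_
  have hSρ : (ρ • (1 : Matrix (Fin p) (Fin p) ℝ) - S).PosSemidef :=
    (aux_up S hS ρ).mpr fun i => le_ciSup (Set.finite_range _).bddAbove i
  have hlo := (aux_low Ω hΩ.1 a).mp hl
  have hup := (aux_up Ω hΩ.1 b).mp hu
  have hM : (mt • Ω + t • Ω⁻¹ - c • (1 : Matrix (Fin p) (Fin p) ℝ)).PosSemidef := by
    obtain ⟨U, h1, h2, h3⟩ := aux_diag Ω hΩ.1
    set d := hΩ.1.eigenvalues with hd
    have hinv : Ω⁻¹ = U * diagonal (fun i => (d i)⁻¹) * Uᴴ := by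
      refine Matrix.inv_eq_right_inv ?_
      calc Ω * (U * diagonal (fun i => (d i)⁻¹) * Uᴴ)
          = U * diagonal d * (Uᴴ * U) * diagonal (fun i => (d i)⁻¹) * Uᴴ := by
            conv_lhs => rw [h3]
            simp only [Matrix.mul_assoc]
        _ = U * (diagonal d * diagonal (fun i => (d i)⁻¹)) * Uᴴ := by
            rw [h1]; simp only [Matrix.mul_assoc, Matrix.one_mul]
        _ = 1 := by
            have : ∀ i, d i * (d i)⁻¹ = 1 := fun i =>
              mul_inv_cancel₀ (ha.trans_le (hlo i)).ne'
            rw [diagonal_mul_diagonal]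
            simp only [this]
            rw [diagonal_one, Matrix.mul_one, h2]
    have e : mt • Ω + t • Ω⁻¹ - c • (1 : Matrix (Fin p) (Fin p) ℝ)
        = U * diagonal (fun i => mt * d i + t * (d i)⁻¹ - c) * Uᴴ := by
      have e2 : (diagonal (fun i => mt * d i + t * (d i)⁻¹ - c) : Matrix (Fin p) (Fin p) ℝ)
          = mt • diagonal d + t • diagonal (fun i => (d i)⁻¹) - diagonal (fun _ => c) := by
        rw [← diagonal_smul, ← diagonal_smul, diagonal_add, diagonal_sub]
        rfl
      rw [e2, Matrix.mul_sub, Matrix.mul_add, Matrix.sub_mul, Matrix.add_mul,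
        ← aux_smul_one U h2 c]
      simp only [Matrix.mul_smul, Matrix.smul_mul]
      rw [← hinv, ← h3]
    rw [e, aux_psd U h1]
    intro i
    have := aux_scalar t mt a b (d i) ht hmtpos ha (hlo i) (hup i) hout
    rw [← div_eq_mul_inv]
    linarith
  have e : Ωhalf - (c - t * ρ) • (1 : Matrix (Fin p) (Fin p) ℝ)
      = (mt • Ω + t • Ω⁻¹ - c • (1 : Matrix (Fin p) (Fin p) ℝ))
        + t • (ρ • (1 : Matrix (Fin p) (Fin p) ℝ) - S) := by
    rw [hhalf, hmt]
    module
  rw [e]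
  exact hM.add (hSρ.smul ht.le)
end
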